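/- Under the model assumptions (columns of M absolutely summable with p fixed, entries of Γ absolutely summable, X and δ with i.i.d. standard complex Gaussian entries, τ_i i.i.d. positive with finite mean and (1/N)∑τ_i → 1 almost surely, (c_k) absolutely summable, m/N → c > 0), the cross term γ̂_m^{cross}(λ) = 2·Re[ d_m(λ)^H·((1/N)·C^{1/2} X T^{1/2} Γ^{1/2} δ M^H)·d_m(λ) ] satisfies sup_{λ∈[0,2π)} | γ̂_m^{cross}(λ) | → 0 almost surely as N → ∞. -/

import Mathlib

open MeasureTheory ProbabilityTheory Filter Matrix Real
open scoped ComplexOrder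

noncomputable section

/-- The positive semidefinite square root of a positive semidefinite matrix
(Mathlib's former `Matrix.PosSemidef.sqrt`). -/
def Matrix.PosSemidef.sqrt {n 𝕜 : Type*} [Fintype n] [RCLike 𝕜] [DecidableEq n]
    {A : Matrix n n 𝕜} (hA : A.PosSemidef) : Matrix n n 𝕜 :=
  hA.1.eigenvectorUnitary.1 * Matrix.diagonal ((↑) ∘ Real.sqrt ∘ hA.1.eigenvalues) *
    (star hA.1.eigenvectorUnitary : Matrix n n 𝕜)

/-- Spectral norm (largest singular value) of a complex matrix. -/
def opNorm {a b : ℕ} (A : Matrix (Fin a) (Fin b) ℂ) : ℝ :=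
  ‖LinearMap.toContinuousLinearMap (Matrix.toEuclideanLin A)‖

/-- Fourier vector `d_m(λ) = m^{-1/2} (1, e^{-iλ}, …, e^{-i(m-1)λ})ᵀ`. -/
def dm (m : ℕ) (l : ℝ) : Fin m → ℂ :=
  fun j => (Real.sqrt m : ℂ)⁻¹ * Complex.exp (-(Complex.I) * ((j : ℕ) : ℂ) * (l : ℂ))

/-- Sum of the entries of the `k`-th superdiagonal of `A`, divided by `m`. -/
def supDiagAvg {m : ℕ} (A : Matrix (Fin m) (Fin m) ℂ) (k : ℕ) : ℂ :=
  (m : ℂ)⁻¹ * ∑ l : Fin m, if h : (l : ℕ) + k < m then A l ⟨(l : ℕ) + k, h⟩ else 0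

/-- Sum of the entries of the `k`-th subdiagonal of `A`, divided by `m`. -/
def subDiagAvg {m : ℕ} (A : Matrix (Fin m) (Fin m) ℂ) (k : ℕ) : ℂ :=
  (m : ℂ)⁻¹ * ∑ l : Fin m, if h : (l : ℕ) + k < m then A ⟨(l : ℕ) + k, h⟩ l else 0

/-- Averaged `k`-th diagonal of `A`, for `k : ℤ`. -/
def diagAvg {m : ℕ} (A : Matrix (Fin m) (Fin m) ℂ) (k : ℤ) : ℂ :=
  if 0 ≤ k then supDiagAvg A k.toNat else subDiagAvg A (-k).toNat

/-- The Toeplitzification operator `𝒯`. -/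
def toep {m : ℕ} (A : Matrix (Fin m) (Fin m) ℂ) : Matrix (Fin m) (Fin m) ℂ :=
  Matrix.of fun i j =>
    if (i : ℕ) ≤ (j : ℕ) then supDiagAvg A ((j : ℕ) - (i : ℕ))
    else star (supDiagAvg A ((i : ℕ) - (j : ℕ)))

/-- The standard complex Gaussian distribution (independent real and imaginary
parts, each `N(0, 1/2)`, so that the variance `E|x|²` equals `1`). -/
def stdComplexGaussian : Measure ℂ :=
  Measure.map (Complex.measurableEquivRealProd.symm)
    ((gaussianReal 0 (1/2)).prod (gaussianReal 0 (1/2)))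

/-- Outer product `z z^H` of a vector with itself. -/
def vecOuter {m : ℕ} (z : Fin m → ℂ) : Matrix (Fin m) (Fin m) ℂ :=
  Matrix.of fun a b => z a * star (z b)

instance matrixMeasurableSpace {m n : ℕ} : MeasurableSpace (Matrix (Fin m) (Fin n) ℂ) :=
  (inferInstance : MeasurableSpace (Fin m → Fin n → ℂ))

/-- `i`-th column of a matrix, as a vector. -/
def colv {m N : ℕ} (A : Matrix (Fin m) (Fin N) ℂ) (i : Fin N) : Fin m → ℂ := fun a => A a i

/-- Maronna fixed-point equation for the scatter-matrix estimator built on the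
sample vectors `z 0, …, z (N-1)`. -/
def isFP {m N : ℕ} (u : ℝ → ℝ) (z : Fin N → Fin m → ℂ)
    (S : Matrix (Fin m) (Fin m) ℂ) : Prop :=
  S = (N : ℂ)⁻¹ • ∑ i : Fin N,
        u ((m : ℝ)⁻¹ * (star (z i) ⬝ᵥ (S⁻¹ *ᵥ z i)).re) • vecOuter (z i)

/-- Truncated spectral density `γ_m(λ) = ∑_{|k| ≤ m-1} c_k e^{ikλ}`. -/
def symbolTrunc (cf : ℤ → ℂ) (m : ℕ) (l : ℝ) : ℂ :=
  ∑ k ∈ Finset.Icc (1 - (m : ℤ)) ((m : ℤ) - 1),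
    cf k * Complex.exp (Complex.I * (k : ℂ) * (l : ℂ))

/-- `‖γ‖_∞ = sup_{λ ∈ [0,2π)} |∑_{k ∈ ℤ} c_k e^{ikλ}|`. -/
def supSymbol (cf : ℤ → ℂ) : ℝ :=
  ⨆ l ∈ Set.Ico (0 : ℝ) (2 * π),
    ‖∑' k : ℤ, cf k * Complex.exp (Complex.I * (k : ℂ) * (l : ℂ))‖

/-- Grid point `λ_i = 2πi/⌊N^β⌋`. -/
def gridPt (N : ℕ) (β : ℝ) (i : ℕ) : ℝ :=
  2 * π * (i : ℝ) / (Nat.floor ((N : ℝ) ^ β) : ℝ)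



theorem sqrt_mul_conj {n : ℕ} {A : Matrix (Fin n) (Fin n) ℂ} (hA : A.PosSemidef) :
    hA.sqrt * hA.sqrtᴴ = A := by
  have h := hA.1.spectral_theorem
  rw [Unitary.conjStarAlgAut_apply] at h
  have hU : (star hA.1.eigenvectorUnitary : Matrix (Fin n) (Fin n) ℂ) *
      hA.1.eigenvectorUnitary.1 = 1 := Unitary.coe_star_mul_self _
  unfold Matrix.PosSemidef.sqrt
  conv_rhs => rw [h]
  rw [Matrix.conjTranspose_mul, Matrix.conjTranspose_mul, Matrix.diagonal_conjTranspose]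
  simp only [← Matrix.star_eq_conjTranspose, star_star]
  rw [← Matrix.mul_assoc, ← Matrix.mul_assoc]
  rw [Matrix.mul_assoc _ (star hA.1.eigenvectorUnitary.1), hU, Matrix.mul_one]
  rw [Matrix.mul_assoc _ (Matrix.diagonal _) (Matrix.diagonal _), Matrix.diagonal_mul_diagonal]
  congr 3
  ext i
  simp only [Function.comp, Pi.star_apply, RCLike.star_def, Complex.coe_algebraMap]
  have := hA.eigenvalues_nonneg i
  simp
  rw [← Complex.ofReal_mul, Real.mul_self_sqrt this]

theorem sqrt_row_sum {n : ℕ} {A : Matrix (Fin n) (Fin n) ℂ} (hA : A.PosSemidef) (i : Fin n) :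
    ∑ a, ‖hA.sqrt i a‖ₑ ^ 2 = ‖A i i‖ₑ := by
  have h : A i i = ((∑ a, ‖hA.sqrt i a‖ ^ 2 : ℝ) : ℂ) := by
    conv_lhs => rw [← sqrt_mul_conj hA]
    rw [Matrix.mul_apply]
    push_cast
    refine Finset.sum_congr rfl fun a _ => ?_
    rw [Matrix.conjTranspose_apply, RCLike.star_def, Complex.mul_conj']
  have h2 : ‖A i i‖ = ∑ a, ‖hA.sqrt i a‖ ^ 2 := by
    rw [h, Complex.norm_real, Real.norm_of_nonneg]
    exact Finset.sum_nonneg fun _ _ => by positivity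
  rw [← ofReal_norm, h2, ENNReal.ofReal_sum_of_nonneg (fun _ _ => by positivity)]
  refine Finset.sum_congr rfl fun a _ => ?_
  rw [ENNReal.ofReal_pow (norm_nonneg _), ofReal_norm]

instance : IsProbabilityMeasure stdComplexGaussian := by
  unfold stdComplexGaussian
  exact Measure.isProbabilityMeasure_map (by fun_prop)

theorem map_re_std : stdComplexGaussian.map Complex.re = gaussianReal 0 (1/2) := by
  unfold stdComplexGaussian
  rw [Measure.map_map (by fun_prop) (by fun_prop)]
  have : (Complex.re ∘ Complex.measurableEquivRealProd.symm) = Prod.fst := by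
    ext x; simp [Complex.measurableEquivRealProd]
  rw [this, Measure.map_fst_prod]; simp

theorem map_im_std : stdComplexGaussian.map Complex.im = gaussianReal 0 (1/2) := by
  unfold stdComplexGaussian
  rw [Measure.map_map (by fun_prop) (by fun_prop)]
  have : (Complex.im ∘ Complex.measurableEquivRealProd.symm) = Prod.snd := by
    ext x; simp [Complex.measurableEquivRealProd]
  rw [this, Measure.map_snd_prod]; simp

theorem real_facts (μ : Measure ℂ) (f : ℂ → ℝ) (hf : Measurable f)
    (h : μ.map f = gaussianReal 0 (1/2)) :
    MemLp f 2 μ ∧ ∫ z, f z ∂μ = 0 ∧ ∫ z, f z ^ 2 ∂μ = 1/2 := by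
  refine ⟨?_, ?_, ?_⟩
  · have := memLp_id_gaussianReal (μ := 0) (v := 1/2) 2
    rw [← h] at this
    exact (memLp_map_measure_iff (by fun_prop) hf.aemeasurable).1 this
  · have := integral_id_gaussianReal (μ := 0) (v := 1/2)
    rw [← h, integral_map hf.aemeasurable (by fun_prop)] at this
    exact this
  · have := variance_id_gaussianReal (μ := 0) (v := 1/2)
    rw [variance_of_integral_eq_zero (by fun_prop) (by simp), ← h, integral_map hf.aemeasurable (by fun_prop)] at this
    simpa using this

theorem std_facts : MemLp (fun z : ℂ => z) 2 stdComplexGaussian ∧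
    ∫ z, z ∂stdComplexGaussian = 0 ∧ ∫ z, ‖z‖ ^ 2 ∂stdComplexGaussian = 1 := by
  obtain ⟨r1, r2, r3⟩ := real_facts _ _ Complex.measurable_re map_re_std
  obtain ⟨i1, i2, i3⟩ := real_facts _ _ Complex.measurable_im map_im_std
  have hm : MemLp (fun z : ℂ => z) 2 stdComplexGaussian := by
    refine MemLp.of_le (g := fun z : ℂ => |z.re| + |z.im|) (r1.abs.add i1.abs) (by fun_prop) ?_
    refine ae_of_all _ fun z => ?_
    rw [Real.norm_of_nonneg (by positivity)]
    exact Complex.norm_le_abs_re_add_abs_im z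
  refine ⟨hm, ?_, ?_⟩
  · have hi : Integrable (fun z : ℂ => z) stdComplexGaussian := hm.integrable (by norm_num)
    apply Complex.ext
    · have := integral_re (𝕜 := ℂ) hi
      simp only [RCLike.re_to_complex] at this
      rw [← this, r2]; rfl
    · have := integral_im (𝕜 := ℂ) hi
      simp only [RCLike.im_to_complex] at this
      rw [← this, i2]; rfl
  · have : ∀ z : ℂ, ‖z‖ ^ 2 = z.re ^ 2 + z.im ^ 2 := fun z => by
      rw [Complex.sq_norm, Complex.normSq_apply]; ring
    simp_rw [this]
    rw [integral_add r1.integrable_sq i1.integrable_sq, r3, i3]; norm_num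

theorem lin_second {Ω ι : Type*} [MeasurableSpace Ω] [Fintype ι] (P : Measure Ω)
    [IsProbabilityMeasure P] (z : ι → Ω → ℂ) (hind : iIndepFun z P)
    (hlaw : ∀ i, Measure.map (z i) P = stdComplexGaussian) (a : ι → ℂ) :
    ∫⁻ ω, ‖∑ i, a i * z i ω‖ₑ ^ 2 ∂P = ∑ i, ‖a i‖ₑ ^ 2 := by
  obtain ⟨s1, s2, s3⟩ := std_facts
  have hae : ∀ i, AEMeasurable (z i) P := fun i => by
    apply AEMeasurable.of_map_ne_zero
    rw [hlaw]; exact IsProbabilityMeasure.ne_zero _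
  have hL : ∀ i, MemLp (z i) 2 P := fun i => by
    rw [← hlaw i] at s1
    exact (memLp_map_measure_iff (by fun_prop) (hae i)).1 s1
  have hE : ∀ i, ∫ ω, z i ω ∂P = 0 := fun i => by
    rw [← hlaw i, integral_map (hae i) (by fun_prop)] at s2
    exact s2
  have hV : ∀ i, ∫ ω, ‖z i ω‖ ^ 2 ∂P = 1 := fun i => by
    rw [← hlaw i, integral_map (hae i) (by fun_prop)] at s3
    exact s3
  have haL : ∀ i, MemLp (fun ω => a i * z i ω) 2 P := fun i => (hL i).const_mul _
  have haE : ∀ i, ∫ ω, a i * z i ω ∂P = 0 := fun i => by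
    rw [integral_const_mul, hE, mul_zero]
  have reL : ∀ i, MemLp (fun ω => (a i * z i ω).re) 2 P := fun i => (haL i).re
  have imL : ∀ i, MemLp (fun ω => (a i * z i ω).im) 2 P := fun i => (haL i).im
  have reE : ∀ i, ∫ ω, (a i * z i ω).re ∂P = 0 := fun i => by
    have := integral_re (𝕜 := ℂ) ((haL i).integrable (by norm_num))
    simp only [RCLike.re_to_complex] at this
    rw [this, haE]; rfl
  have imE : ∀ i, ∫ ω, (a i * z i ω).im ∂P = 0 := fun i => by
    have := integral_im (𝕜 := ℂ) ((haL i).integrable (by norm_num))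
    simp only [RCLike.im_to_complex] at this
    rw [this, haE]; rfl
  have gen : ∀ f : ι → Ω → ℝ, (∀ i, MemLp (f i) 2 P) → (∀ i, ∫ ω, f i ω ∂P = 0) →
      (∀ i j, i ≠ j → IndepFun (f i) (f j) P) →
      ∫ ω, (∑ i, f i ω) ^ 2 ∂P = ∑ i, ∫ ω, f i ω ^ 2 ∂P := by
    intro f h1 h2 h3
    have := IndepFun.variance_sum (s := Finset.univ) (X := f) (μ := P) (fun i _ => h1 i)
      (fun i _ j _ hij => h3 i j hij)
    rw [variance_of_integral_eq_zero] at this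
    · simp only [Finset.sum_apply] at this
      rw [this]
      refine Finset.sum_congr rfl fun i _ => ?_
      rw [variance_of_integral_eq_zero (h1 i).aemeasurable (h2 i)]
    · exact (memLp_finsetSum' _ fun i _ => h1 i).aemeasurable
    · simp only [Finset.sum_apply]
      rw [integral_finsetSum _ (fun i _ => (h1 i).integrable (by norm_num))]
      simp [h2]
  have hre := gen _ reL reE (fun i j hij => (hind.indepFun hij).comp
    (φ := fun w => (a i * w).re) (ψ := fun w => (a j * w).re) (by fun_prop) (by fun_prop))
  have him := gen _ imL imE (fun i j hij => (hind.indepFun hij).comp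
    (φ := fun w => (a i * w).im) (ψ := fun w => (a j * w).im) (by fun_prop) (by fun_prop))
  have hsq : ∀ z : ℂ, ‖z‖ ^ 2 = z.re ^ 2 + z.im ^ 2 := fun z => by
      rw [Complex.sq_norm, Complex.normSq_apply]; ring
  have hS : MemLp (fun ω => ∑ i, a i * z i ω) 2 P := memLp_finsetSum _ fun i _ => haL i
  have hfin : ∫ ω, ‖∑ i, a i * z i ω‖ ^ 2 ∂P = ∑ i, ‖a i‖ ^ 2 := by
    simp_rw [hsq (∑ i, _)]
    have hr : Integrable (fun ω => (∑ i, a i * z i ω).re ^ 2) P := hS.re.integrable_sq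
    have hi : Integrable (fun ω => (∑ i, a i * z i ω).im ^ 2) P := hS.im.integrable_sq
    rw [integral_add hr hi]
    simp only [Complex.re_sum, Complex.im_sum]
    rw [hre, him, ← Finset.sum_add_distrib]
    refine Finset.sum_congr rfl fun i _ => ?_
    rw [← integral_add (reL i).integrable_sq (imL i).integrable_sq]
    simp_rw [← hsq, norm_mul, mul_pow]
    rw [integral_const_mul, hV, mul_one]
  have e1 : ∀ w : ℂ, ‖w‖ₑ ^ 2 = ENNReal.ofReal (‖w‖ ^ 2) := fun w => by
    rw [ENNReal.ofReal_pow (norm_nonneg _), ofReal_norm]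
  simp_rw [e1]
  rw [← ofReal_integral_eq_lintegral_ofReal hS.norm.integrable_sq
    (ae_of_all _ fun _ => by positivity), hfin,
    ENNReal.ofReal_sum_of_nonneg (fun _ _ => by positivity)]

theorem triple {Ω α β γ : Type*} [MeasurableSpace Ω] [MeasurableSpace α] [MeasurableSpace β]
    [MeasurableSpace γ] (P : Measure Ω) [IsProbabilityMeasure P] (X : Ω → α) (Y : Ω → β) (T : Ω → γ)
    (hX : AEMeasurable X P) (hY : AEMeasurable Y P) (hT : AEMeasurable T P)
    (h1 : IndepFun (fun ω => (X ω, Y ω)) T P) (h2 : IndepFun X Y P)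
    (F : (α × β) × γ → ENNReal) (hF : Measurable F) :
    ∫⁻ ω, F ((X ω, Y ω), T ω) ∂P =
      ∫⁻ w, ∫⁻ v, ∫⁻ u, F ((X u, Y v), T w) ∂P ∂P ∂P := by
  have e1 := (indepFun_iff_map_prod_eq_prod_map_map (hX.prodMk hY) hT).1 h1
  have e2 := (indepFun_iff_map_prod_eq_prod_map_map hX hY).1 h2
  have : IsProbabilityMeasure (P.map X) := Measure.isProbabilityMeasure_map hX
  have : IsProbabilityMeasure (P.map Y) := Measure.isProbabilityMeasure_map hY
  have : IsProbabilityMeasure (P.map T) := Measure.isProbabilityMeasure_map hT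
  have : ∫⁻ ω, F ((X ω, Y ω), T ω) ∂P =
      ∫⁻ q, F q ∂(P.map (fun ω => ((X ω, Y ω), T ω))) := by
    rw [lintegral_map' hF.aemeasurable ((hX.prodMk hY).prodMk hT)]
  rw [this, e1, e2, lintegral_prod_symm _ hF.aemeasurable, lintegral_map' _ hT]
  · refine lintegral_congr fun w => ?_
    rw [lintegral_prod_symm _ (by fun_prop), lintegral_map' _ hY]
    · refine lintegral_congr fun v => ?_
      rw [lintegral_map' (by fun_prop) hX]
    · exact (Measurable.lintegral_prod_left' (f := fun q : α × β => F (q, T w))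
        (by fun_prop)).aemeasurable
  · exact (Measurable.lintegral_prod_left' hF).aemeasurable

theorem entry_expand {m n p : ℕ} (S : Matrix (Fin m) (Fin m) ℂ) (x : Matrix (Fin m) (Fin n) ℂ)
    (t : Fin n → ℂ) (G : Matrix (Fin n) (Fin n) ℂ) (y : Matrix (Fin n) (Fin p) ℂ)
    (i : Fin m) (s : Fin p) :
    (S * x * Matrix.diagonal t * G * y) i s =
      ∑ q : Fin m × Fin n, S i q.1 * (t q.2 * ∑ k, G q.2 k * y k s) * x q.1 q.2 := by
  rw [Matrix.mul_assoc, Matrix.mul_assoc, Matrix.mul_assoc, Matrix.mul_apply,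
    Fintype.sum_prod_type]
  refine Finset.sum_congr rfl fun a _ => ?_
  rw [Matrix.mul_apply, Finset.mul_sum]
  refine Finset.sum_congr rfl fun j _ => ?_
  rw [Matrix.diagonal_mul, Matrix.mul_apply]
  ring

theorem enorm_sqrt_sq (t : ℝ) : ‖((Real.sqrt t : ℝ) : ℂ)‖ₑ ^ 2 = ENNReal.ofReal t := by
  rw [← ofReal_norm, ← ENNReal.ofReal_pow (norm_nonneg _), Complex.norm_real,
    Real.norm_of_nonneg (Real.sqrt_nonneg _)]
  rcases le_total 0 t with h | h
  · rw [Real.sq_sqrt h]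
  · rw [Real.sqrt_eq_zero_of_nonpos h, ENNReal.ofReal_of_nonpos h]; simp

theorem moment {Ω : Type*} [MeasurableSpace Ω] (P : Measure Ω) [IsProbabilityMeasure P]
    {m n p : ℕ} (S : Matrix (Fin m) (Fin m) ℂ) (G : Matrix (Fin n) (Fin n) ℂ)
    (X : Ω → Fin m → Fin n → ℂ) (Y : Ω → Fin n → Fin p → ℂ) (T : Ω → Fin n → ℝ)
    (hX : AEMeasurable X P) (hY : AEMeasurable Y P) (hT : AEMeasurable T P)
    (h1 : IndepFun (fun ω => (X ω, Y ω)) T P) (h2 : IndepFun X Y P)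
    (hXi : iIndepFun (fun (ij : Fin m × Fin n) => fun ω => X ω ij.1 ij.2) P)
    (hXl : ∀ i j, Measure.map (fun ω => X ω i j) P = stdComplexGaussian)
    (hYi : iIndepFun (fun (ij : Fin n × Fin p) => fun ω => Y ω ij.1 ij.2) P)
    (hYl : ∀ i j, Measure.map (fun ω => Y ω i j) P = stdComplexGaussian) (s : Fin p) :
    ∫⁻ ω, ∑ i, ‖∑ q : Fin m × Fin n, S i q.1 * ((Real.sqrt (T ω q.2) : ℂ) *
        ∑ k, G q.2 k * Y ω k s) * X ω q.1 q.2‖ₑ ^ 2 ∂P =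
      (∑ i, ∑ a, ‖S i a‖ₑ ^ 2) *
        ∑ j, (∑ k, ‖G j k‖ₑ ^ 2) * ∫⁻ ω, ENNReal.ofReal (T ω j) ∂P := by
  have hm : Measurable (fun q : ((Fin m → Fin n → ℂ) × (Fin n → Fin p → ℂ)) × (Fin n → ℝ) =>
      ∑ i, ‖∑ r : Fin m × Fin n, S i r.1 * ((Real.sqrt (q.2 r.2) : ℂ) *
        ∑ k, G r.2 k * q.1.2 k s) * q.1.1 r.1 r.2‖ₑ ^ 2) := by fun_prop
  have hXe : ∀ i j, AEMeasurable (fun ω => X ω i j) P := fun i j => by fun_prop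
  have hYe : ∀ i j, AEMeasurable (fun ω => Y ω i j) P := fun i j => by fun_prop
  have hTe : ∀ i, AEMeasurable (fun ω => T ω i) P := fun i => by fun_prop
  have := triple P X Y T hX hY hT h1 h2 _ hm
  rw [this]
  have inner : ∀ w v, ∫⁻ u, ∑ i, ‖∑ r : Fin m × Fin n, S i r.1 * ((Real.sqrt (T w r.2) : ℂ) *
        ∑ k, G r.2 k * Y v k s) * X u r.1 r.2‖ₑ ^ 2 ∂P =
      (∑ i, ∑ a, ‖S i a‖ₑ ^ 2) *
        ∑ j, ENNReal.ofReal (T w j) * ‖∑ k, G j k * Y v k s‖ₑ ^ 2 := by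
    intro w v
    rw [lintegral_finsetSum' _ (fun i _ => by fun_prop), Finset.sum_mul]
    refine Finset.sum_congr rfl fun i _ => ?_
    rw [lin_second P (fun (r : Fin m × Fin n) u => X u r.1 r.2) hXi (fun r => hXl r.1 r.2),
      Fintype.sum_prod_type, Finset.sum_mul_sum]
    refine Finset.sum_congr rfl fun a _ => Finset.sum_congr rfl fun j _ => ?_
    rw [enorm_mul, enorm_mul, mul_pow, mul_pow, enorm_sqrt_sq]
  have mid : ∀ w, ∫⁻ v, (∑ i, ∑ a, ‖S i a‖ₑ ^ 2) *
        ∑ j, ENNReal.ofReal (T w j) * ‖∑ k, G j k * Y v k s‖ₑ ^ 2 ∂P =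
      (∑ i, ∑ a, ‖S i a‖ₑ ^ 2) *
        ∑ j, (∑ k, ‖G j k‖ₑ ^ 2) * ENNReal.ofReal (T w j) := by
    intro w
    rw [lintegral_const_mul'' _ (by fun_prop), lintegral_finsetSum' _ (fun i _ => by fun_prop)]
    congr 1
    refine Finset.sum_congr rfl fun j _ => ?_
    rw [lintegral_const_mul'' _ (by fun_prop), mul_comm]
    congr 1
    refine lin_second P (fun k v => Y v k s) ?_ (fun k => hYl k s) _
    exact hYi.precomp (g := fun k => (k, s)) (fun a b h => by simpa using h)
  simp_rw [inner, mid]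
  rw [lintegral_const_mul'' _ (by fun_prop), lintegral_finsetSum' _ (fun i _ => by fun_prop)]
  congr 1
  refine Finset.sum_congr rfl fun j _ => ?_
  rw [lintegral_const_mul'' _ (by fun_prop)]

theorem bc {Ω : Type*} [MeasurableSpace Ω] (P : Measure Ω) (f : ℕ → Ω → ℝ) (A : ℝ)
    (h0 : ∀ n ω, 0 ≤ f n ω)
    (hf : ∀ n, AEMeasurable (f n) P)
    (h : ∀ n, ∫⁻ ω, ENNReal.ofReal (f n ω) ∂P ≤ ENNReal.ofReal (A * ((n : ℝ) ^ 2)⁻¹)) :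
    ∀ᵐ ω ∂P, Tendsto (fun n => f n ω) atTop (nhds 0) := by
  have hs : Summable (fun n : ℕ => A * ((n : ℝ) ^ 2)⁻¹) :=
    (Real.summable_nat_pow_inv.2 (by norm_num)).mul_left _
  have hfin : ∫⁻ ω, ∑' n, ENNReal.ofReal (f n ω) ∂P ≠ ⊤ := by
    rw [lintegral_tsum (fun n => by have := hf n; fun_prop)]
    exact ne_top_of_le_ne_top hs.tsum_ofReal_ne_top (ENNReal.tsum_le_tsum h)
  have := ae_lt_top' (AEMeasurable.tsum (fun n => by have := hf n; fun_prop)) hfin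
  filter_upwards [this] with ω hω
  have h2 := ENNReal.tendsto_atTop_zero_of_tsum_ne_top hω.ne
  have h3 := (ENNReal.tendsto_toReal ENNReal.zero_ne_top).comp h2
  simpa [Function.comp_def, ENNReal.toReal_ofReal (h0 _ _)] using h3

theorem norm_dm (m : ℕ) (l : ℝ) (j : Fin m) : ‖dm m l j‖ = (Real.sqrt m)⁻¹ := by
  unfold dm
  have : -(Complex.I) * ((j : ℕ) : ℂ) * (l : ℂ) = ((-(j : ℝ) * l : ℝ) : ℂ) * Complex.I := by
    push_cast; ring
  rw [this, norm_mul, Complex.norm_exp_ofReal_mul_I, norm_inv, Complex.norm_real,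
    Real.norm_of_nonneg (Real.sqrt_nonneg _), mul_one]

theorem det_bound {m p : ℕ} (n : ℕ) (W : Matrix (Fin m) (Fin p) ℂ) (M : Matrix (Fin m) (Fin p) ℂ)
    (K : ℝ) (hK : ∀ s, ∑ i, ‖M i s‖ ≤ K) (l : ℝ) :
    |2 * (star (dm m l) ⬝ᵥ (((n : ℂ)⁻¹ • (W * Mᴴ)) *ᵥ dm m l)).re| ≤
      2 * K * ∑ s, Real.sqrt (((n : ℝ) ^ 2)⁻¹ * (m : ℝ)⁻¹ * ∑ i, ‖W i s‖ ^ 2) := by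
  have e : star (dm m l) ⬝ᵥ (((n : ℂ)⁻¹ • (W * Mᴴ)) *ᵥ dm m l) =
      (n : ℂ)⁻¹ * ∑ s, (∑ i, star (dm m l i) * W i s) * (∑ i, star (M i s) * dm m l i) := by
    rw [Matrix.smul_mulVec, dotProduct_smul, smul_eq_mul, ← Matrix.mulVec_mulVec,
      Matrix.dotProduct_mulVec]
    rfl
  have b1 : ∀ s, ‖∑ i, star (M i s) * dm m l i‖ ≤ K * (Real.sqrt m)⁻¹ := by
    intro s
    refine (norm_sum_le _ _).trans ?_
    simp_rw [norm_mul, norm_star, norm_dm]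
    rw [← Finset.sum_mul]
    exact mul_le_mul_of_nonneg_right (hK s) (by positivity)
  have b2 : ∀ s, ‖∑ i, star (dm m l i) * W i s‖ ≤ Real.sqrt (∑ i, ‖W i s‖ ^ 2) := by
    intro s
    refine (norm_sum_le _ _).trans ?_
    simp_rw [norm_mul, norm_star, norm_dm]
    rw [← Finset.mul_sum]
    apply Real.le_sqrt_of_sq_le
    have h := sq_sum_le_card_mul_sum_sq (s := Finset.univ) (f := fun i => ‖W i s‖)
    rw [Finset.card_univ, Fintype.card_fin] at h
    rw [mul_pow, inv_pow, Real.sq_sqrt (by positivity)]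
    rcases Nat.eq_zero_or_pos m with h0 | h0
    · subst h0; simp
    · rw [inv_mul_le_iff₀ (by exact_mod_cast h0)]
      exact h
  rw [e, abs_mul, abs_of_pos (by norm_num : (0 : ℝ) < 2), mul_assoc]
  refine mul_le_mul_of_nonneg_left ?_ (by norm_num)
  refine (Complex.abs_re_le_norm _).trans ?_
  rw [norm_mul, Finset.mul_sum]
  refine (mul_le_mul_of_nonneg_left (norm_sum_le _ _) (norm_nonneg _)).trans ?_
  rw [Finset.mul_sum]
  refine Finset.sum_le_sum fun s _ => ?_
  rw [Real.sqrt_mul (by positivity), Real.sqrt_mul (by positivity), ← inv_pow,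
    Real.sqrt_sq (by positivity), Real.sqrt_inv, norm_mul, norm_inv, Complex.norm_natCast]
  calc (n : ℝ)⁻¹ * (‖∑ i, star (dm m l i) * W i s‖ * ‖∑ i, star (M i s) * dm m l i‖)
      ≤ (n : ℝ)⁻¹ * (Real.sqrt (∑ i, ‖W i s‖ ^ 2) * (K * (Real.sqrt m)⁻¹)) := by
        gcongr
        · exact b2 s
        · exact b1 s
    _ = _ := by ring

/-- Uniform almost-sure convergence to zero of the cross term
`γ̂_m^{cross}(λ) = 2 Re[d_m(λ)^H ((1/N) C^{1/2} X T^{1/2} Γ^{1/2} δ M^H) d_m(λ)]`. -/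
theorem stmt18
    {Ω : Type*} [MeasurableSpace Ω] (P : Measure Ω) [IsProbabilityMeasure P]
    (mdim : ℕ → ℕ) (c : ℝ) (hc : 0 < c)
    (hmc : Tendsto (fun N : ℕ => (mdim N : ℝ) / (N : ℝ)) atTop (nhds c))
    (cf : ℤ → ℂ) (hcf_sum : Summable fun k => ‖cf k‖) (hcf0 : cf 0 ≠ 0)
    (hcf_herm : ∀ k, cf (-k) = star (cf k))
    (C : (N : ℕ) → Matrix (Fin (mdim N)) (Fin (mdim N)) ℂ)
    (hC_toep : ∀ N i j, C N i j = cf ((j : ℤ) - (i : ℤ)))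
    (hC_psd : ∀ N, (C N).PosSemidef)
    (p : ℕ)
    (M : (N : ℕ) → Matrix (Fin (mdim N)) (Fin p) ℂ)
    (hM_col : ∃ K : ℝ, ∀ N s, ∑ i, ‖M N i s‖ ≤ K)
    (hM_bdd : ∃ K : ℝ, ∀ N, opNorm (M N) ≤ K)
    (Γm : (N : ℕ) → Matrix (Fin N) (Fin N) ℂ)
    (hΓ_psd : ∀ N, (Γm N).PosSemidef)
    (hΓ_sum : ∃ K : ℝ, ∀ N, ∑ i : Fin N, ∑ j : Fin N, ‖Γm N i j‖ ≤ K)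
    (hΓ_bdd : ∃ K : ℝ, ∀ N, opNorm (Γm N) ≤ K)
    (X : (N : ℕ) → Ω → Matrix (Fin (mdim N)) (Fin N) ℂ)
    (hX_indep : ∀ N, iIndepFun
      (fun (ij : Fin (mdim N) × Fin N) => fun ω => X N ω ij.1 ij.2) P)
    (hX_law : ∀ N i j, Measure.map (fun ω => X N ω i j) P = stdComplexGaussian)
    (δm : (N : ℕ) → Ω → Matrix (Fin N) (Fin p) ℂ)
    (hδ_indep : ∀ N, iIndepFun
      (fun (ij : Fin N × Fin p) => fun ω => δm N ω ij.1 ij.2) P)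
    (hδ_law : ∀ N i j, Measure.map (fun ω => δm N ω i j) P = stdComplexGaussian)
    (τ : (N : ℕ) → Ω → Fin N → ℝ)
    (hτ_pos : ∀ N, ∀ᵐ ω ∂P, ∀ i, 0 < τ N ω i)
    (hτ_indep : ∀ N, iIndepFun (fun i => fun ω => τ N ω i) P)
    (hτ_ident : ∀ N i j, IdentDistrib (fun ω => τ N ω i) (fun ω => τ N ω j) P P)
    (Eτ : ℝ) (hEτ_pos : 0 < Eτ)
    (hτ_int : ∀ N i, Integrable (fun ω => τ N ω i) P)
    (hτ_mean : ∀ N i, ∫ ω, τ N ω i ∂P = Eτ)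
    (hτ_lln : ∀ᵐ ω ∂P, Tendsto (fun N : ℕ => (N : ℝ)⁻¹ * ∑ i : Fin N, τ N ω i)
      atTop (nhds (1 : ℝ)))
    (hIndep : ∀ N, IndepFun (fun ω => (X N ω, δm N ω)) (fun ω => τ N ω) P)
    (hIndepXδ : ∀ N, IndepFun (fun ω => X N ω) (fun ω => δm N ω) P)
 :
    ∀ᵐ ω ∂P, Tendsto
      (fun N : ℕ =>
        ⨆ l ∈ Set.Ico (0 : ℝ) (2 * π),
          |2 * (star (dm (mdim N) l) ⬝ᵥ
            (((N : ℂ)⁻¹ • ((hC_psd N).sqrt * X N ω *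
              Matrix.diagonal (fun i => (Real.sqrt (τ N ω i) : ℂ)) *
              (hΓ_psd N).sqrt * δm N ω * (M N)ᴴ)) *ᵥ dm (mdim N) l)).re|)
      atTop (nhds 0) := by
  obtain ⟨K, hK⟩ := hM_col
  obtain ⟨L, hL⟩ := hΓ_sum
  have hXe : ∀ N, AEMeasurable (X N) P := fun N => by
    refine aemeasurable_pi_iff.2 fun i => aemeasurable_pi_iff.2 fun j => ?_
    apply AEMeasurable.of_map_ne_zero
    have := hX_law N i j
    rw [this]; exact IsProbabilityMeasure.ne_zero _
  have hYe : ∀ N, AEMeasurable (δm N) P := fun N => by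
    refine aemeasurable_pi_iff.2 fun i => aemeasurable_pi_iff.2 fun j => ?_
    apply AEMeasurable.of_map_ne_zero
    have := hδ_law N i j
    rw [this]; exact IsProbabilityMeasure.ne_zero _
  have hTe : ∀ N, AEMeasurable (τ N) P := fun N =>
    aemeasurable_pi_iff.2 fun i => (hτ_int N i).aemeasurable
  have hX' : ∀ N i j, AEMeasurable (fun ω => X N ω i j) P := fun N i j =>
    aemeasurable_pi_iff.1 (aemeasurable_pi_iff.1 (hXe N) i) j
  have hY' : ∀ N i j, AEMeasurable (fun ω => δm N ω i j) P := fun N i j =>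
    aemeasurable_pi_iff.1 (aemeasurable_pi_iff.1 (hYe N) i) j
  have hT' : ∀ N i, AEMeasurable (fun ω => τ N ω i) P := fun N => aemeasurable_pi_iff.1 (hTe N)
  set W : (N : ℕ) → Ω → Matrix (Fin (mdim N)) (Fin p) ℂ := fun N ω =>
    (hC_psd N).sqrt * X N ω * Matrix.diagonal (fun i => (Real.sqrt (τ N ω i) : ℂ)) *
              (hΓ_psd N).sqrt * δm N ω with hW
  have key : ∀ s, ∀ᵐ ω ∂P, Tendsto (fun N : ℕ =>
      ((N : ℝ) ^ 2)⁻¹ * (mdim N : ℝ)⁻¹ * ∑ i, ‖W N ω i s‖ ^ 2) atTop (nhds 0) := by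
    intro s
    refine bc P _ (‖cf 0‖ * (L * Eτ)) (fun N ω => by positivity) (fun N => ?_) (fun N => ?_)
    · simp only [hW, entry_expand]
      fun_prop
    · have hmom := moment P (hC_psd N).sqrt (hΓ_psd N).sqrt (X N) (δm N) (τ N) (hXe N) (hYe N)
        (hTe N) (hIndep N) (hIndepXδ N) (hX_indep N) (hX_law N) (hδ_indep N) (hδ_law N) s
      have e1 : ∀ w : ℂ, ENNReal.ofReal (‖w‖ ^ 2) = ‖w‖ₑ ^ 2 := fun w => by
        rw [ENNReal.ofReal_pow (norm_nonneg _), ofReal_norm]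
      have e2 : ∀ j, ∫⁻ ω, ENNReal.ofReal (τ N ω j) ∂P = ENNReal.ofReal Eτ := fun j => by
        rw [← hτ_mean N j, ofReal_integral_eq_lintegral_ofReal (hτ_int N j)]
        filter_upwards [hτ_pos N] with ω hω using (hω j).le
      have e3 : ∑ j, ‖Γm N j j‖ ≤ L := by
        refine le_trans (Finset.sum_le_sum fun j _ => ?_) (hL N)
        exact Finset.single_le_sum (f := fun k => ‖Γm N j k‖) (fun _ _ => norm_nonneg _)
          (Finset.mem_univ j)
      have e4 : ∑ j, ‖Γm N j j‖ₑ ≤ ENNReal.ofReal L := by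
        refine le_trans (le_of_eq ?_) (ENNReal.ofReal_le_ofReal e3)
        rw [ENNReal.ofReal_sum_of_nonneg (fun _ _ => norm_nonneg _)]
        simp
      have hL0 : 0 ≤ L := le_trans (Finset.sum_nonneg fun _ _ => norm_nonneg _) e3
      simp only [sqrt_row_sum, e2, ← Finset.sum_mul, hC_toep, sub_self, Finset.sum_const,
        Finset.card_univ, Fintype.card_fin, nsmul_eq_mul] at hmom
      have e5 : ∀ ω, ENNReal.ofReal
          (((N : ℝ) ^ 2)⁻¹ * (mdim N : ℝ)⁻¹ * ∑ i, ‖W N ω i s‖ ^ 2) =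
          ENNReal.ofReal (((N : ℝ) ^ 2)⁻¹ * (mdim N : ℝ)⁻¹) * ∑ i, ‖W N ω i s‖ₑ ^ 2 := by
        intro ω
        rw [ENNReal.ofReal_mul (by positivity),
          ENNReal.ofReal_sum_of_nonneg (fun _ _ => by positivity)]
        simp_rw [e1]
      simp_rw [e5]
      rw [lintegral_const_mul' _ _ ENNReal.ofReal_ne_top]
      simp only [hW, entry_expand]
      rw [hmom]
      calc _ ≤ ENNReal.ofReal (((N : ℝ) ^ 2)⁻¹ * (mdim N : ℝ)⁻¹) *
            (ENNReal.ofReal (mdim N) * ENNReal.ofReal ‖cf 0‖ *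
              (ENNReal.ofReal L * ENNReal.ofReal Eτ)) := by
            rw [ENNReal.ofReal_natCast, ofReal_norm]
            gcongr
        _ = ENNReal.ofReal ((((N : ℝ) ^ 2)⁻¹ * (mdim N : ℝ)⁻¹) *
            (mdim N * ‖cf 0‖ * (L * Eτ))) := by
            rw [ENNReal.ofReal_mul (p := ((N : ℝ) ^ 2)⁻¹ * (mdim N : ℝ)⁻¹) (by positivity),
              ENNReal.ofReal_mul (p := (mdim N : ℝ) * ‖cf 0‖) (by positivity),
              ENNReal.ofReal_mul (p := (mdim N : ℝ)) (by positivity), ENNReal.ofReal_mul hL0]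
        _ ≤ _ := by
            apply ENNReal.ofReal_le_ofReal
            have : (mdim N : ℝ)⁻¹ * mdim N ≤ 1 := inv_mul_le_one
            calc _ = ((mdim N : ℝ)⁻¹ * mdim N) * (‖cf 0‖ * (L * Eτ) * ((N : ℝ) ^ 2)⁻¹) := by ring
              _ ≤ 1 * (‖cf 0‖ * (L * Eτ) * ((N : ℝ) ^ 2)⁻¹) := by gcongr
              _ = _ := one_mul _
  filter_upwards [ae_all_iff.2 key] with ω hω
  have hlim : Tendsto (fun N : ℕ => 2 * K * ∑ s, Real.sqrt (((N : ℝ) ^ 2)⁻¹ * (mdim N : ℝ)⁻¹ *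
      ∑ i, ‖W N ω i s‖ ^ 2)) atTop (nhds 0) := by
    have : Tendsto (fun N : ℕ => 2 * K * ∑ s, Real.sqrt (((N : ℝ) ^ 2)⁻¹ * (mdim N : ℝ)⁻¹ *
      ∑ i, ‖W N ω i s‖ ^ 2)) atTop (nhds (2 * K * ∑ s : Fin p, Real.sqrt 0)) :=
      (tendsto_finsetSum _ fun s _ => (hω s).sqrt).const_mul _
    simpa using this
  refine squeeze_zero (fun N => ?_) (fun N => ?_) hlim
  · exact Real.iSup_nonneg fun l => Real.iSup_nonneg fun _ => abs_nonneg _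
  · have hb := fun l => det_bound N (W N ω) (M N) K (hK N) l
    have h0 := (abs_nonneg _).trans (hb 0)
    exact Real.iSup_le (fun l => Real.iSup_le (fun _ => hb l) h0) h0

end
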